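/- arXiv:0912.0855 — 2 statements merged into one kernel-verified Lean document; each statement's English description precedes it below -/
import Mathlib

section
/- Let 𝔤 be a finite-dimensional real Lie algebra and let k ≥ 1 be an odd integer. Define the k-linear form w_k on 𝔤 by w_k(x_1,…,x_k) := ∑_{σ ∈ S_k} sgn(σ) · trace(ad x_{σ(1)} ∘ ⋯ ∘ ad x_{σ(k)}). Then w_k is a Chevalley–Eilenberg cocycle: for all x_1, …, x_{k+1} ∈ 𝔤, ∑_{1 ≤ i < j ≤ k+1} (−1)^{i+j} · w_k([x_i, x_j], x_1, …, x̂_i, …, x̂_j, …, x_{k+1}) = 0, where x̂_i and x̂_j indicate that the arguments x_i and x_j are omitted and the bracket [x_i, x_j] is inserted as the first argument. -/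
/-- The `k`-linear form `w_k(x_1,…,x_k) = ∑_{σ ∈ S_k} sgn σ · tr (ad x_{σ(1)} ∘ ⋯ ∘ ad x_{σ(k)})`
on a real Lie algebra. -/
noncomputable def altAdTraceForm (L : Type*) [LieRing L] [LieAlgebra ℝ L]
    {k : ℕ} (y : Fin k → L) : ℝ :=
  ∑ σ : Equiv.Perm (Fin k),
    ((Equiv.Perm.sign σ : ℤ) : ℝ) *
      LinearMap.trace ℝ L ((List.ofFn fun i => LieAlgebra.ad ℝ L (y (σ i))).prod)

open Equiv in
lemma aux_perm_decomp {α : Type*} {n : ℕ} (x : Fin (n+1) → α) (G : (Fin (n+1) → α) → ℝ) :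
    ∑ τ : Perm (Fin (n+1)), ((Perm.sign τ : ℤ) : ℝ) * G (x ∘ τ) =
    ∑ p : Fin (n+1), (-1 : ℝ) ^ (p : ℕ) * ∑ e : Perm (Fin n), ((Perm.sign e : ℤ) : ℝ) *
      G (Fin.cons (x p) (fun i => x (p.succAbove (e i)))) := by
  simp_rw [Finset.mul_sum]
  rw [← Fintype.sum_prod_type']
  symm
  let Φ : Fin (n+1) × Perm (Fin n) → Perm (Fin (n+1)) := fun pe =>
    (Fin.cycleRange pe.1).symm * Perm.decomposeFin.symm (0, pe.2)
  have h0 : ∀ pe, Φ pe 0 = pe.1 := by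
    intro pe
    simp [Φ]
  have hs : ∀ pe i, Φ pe (Fin.succ i) = pe.1.succAbove (pe.2 i) := by
    intro pe i
    simp [Φ]
  have hinj : Function.Injective Φ := by
    rintro ⟨p, e⟩ ⟨q, f⟩ h
    have h1 : p = q := by
      have := h0 (p, e)
      rw [h, h0] at this
      exact this.symm
    subst h1
    congr 1
    ext i
    have := hs (p, e) i
    rw [h, hs] at this
    simp only at this
    rw [Fin.succAbove_right_injective this]
  have hbij : Function.Bijective Φ := by
    rw [Fintype.bijective_iff_injective_and_card]
    refine ⟨hinj, ?_⟩
    simp [Fintype.card_perm, Nat.factorial_succ]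
  refine Fintype.sum_bijective Φ hbij _ _ ?_
  rintro ⟨p, e⟩
  have hsign : ((Perm.sign (Φ (p, e)) : ℤ) : ℝ) = (-1) ^ (p : ℕ) * ((Perm.sign e : ℤ) : ℝ) := by
    simp only [Φ, Perm.sign_mul, Perm.sign_symm, Fin.sign_cycleRange, Perm.decomposeFin.symm_sign]
    simp
  rw [hsign, mul_assoc]
  congr 3
  funext i
  refine Fin.cases ?_ (fun i => ?_) i
  · simp [h0]
  · simp [hs]

open Equiv in
lemma aux_list_perm {n : ℕ} (l : List (Fin n)) (h : l.Perm (List.finRange n)) :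
    ∃ ρ : Perm (Fin n), l = List.ofFn ρ := by
  have hl : l.length = n := by simpa using h.length_eq
  have hn : l.Nodup := h.nodup_iff.2 (List.nodup_finRange n)
  have hi : Function.Injective (fun i : Fin n => l.get (i.cast hl.symm)) := by
    intro a b hab
    have := List.nodup_iff_injective_get.1 hn hab
    simpa using this
  refine ⟨Equiv.ofBijective _ (Finite.injective_iff_bijective.1 hi), ?_⟩
  apply List.ext_get
  · simp [hl]
  · intro i h1 h2
    simp

universe u

open Equiv in
lemma aux_merge {n : ℕ} (σ : Perm (Fin (n+1))) : ∃ ρ : Perm (Fin (n+2)),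
    ∀ (R : Type u) [Ring R] (z : Fin (n+2) → R),
      (List.ofFn fun i => (Fin.cons (z 0 * z 1) (fun i : Fin n => z i.succ.succ) :
        Fin (n+1) → R) (σ i)).prod = (List.ofFn fun i => z (ρ i)).prod := by
  let g : Fin (n+1) → List (Fin (n+2)) := Fin.cons [0, 1] (fun i => [i.succ.succ])
  have hp : ((List.ofFn σ).flatMap g).Perm (List.finRange (n+2)) := by
    have h1 : (List.ofFn σ).Perm (List.finRange (n+1)) := by
      have := Equiv.Perm.ofFn_comp_perm σ (id : Fin (n+1) → Fin (n+1))
      rw [List.ofFn_id] at this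
      exact this
    refine (h1.flatMap_right g).trans ?_
    rw [List.finRange_succ, List.finRange_succ, List.finRange_succ]
    simp [g, List.flatMap_map, Function.comp_def]
    rw [← List.map_eq_flatMap]
  obtain ⟨ρ, hρ⟩ := aux_list_perm _ hp
  refine ⟨ρ, fun R _ z => ?_⟩
  have h2 : (List.ofFn fun i => z (ρ i)) = (List.ofFn ρ).map z := by
    rw [List.map_ofFn]; rfl
  have h3 : (List.ofFn fun i => (Fin.cons (z 0 * z 1) (fun i : Fin n => z i.succ.succ) :
        Fin (n+1) → R) (σ i)) = (List.ofFn σ).map (fun k => ((g k).map z).prod) := by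
    rw [List.map_ofFn]
    congr 1
    funext i
    simp only [Function.comp]
    refine Fin.cases ?_ (fun k => ?_) (σ i) <;> simp [g]
  rw [h2, h3, ← hρ]
  generalize List.ofFn σ = l
  induction l with
  | nil => simp
  | cons a l ih => simp [ih]

section
variable {V : Type*} [AddCommGroup V] [Module ℝ V]

open Equiv

lemma aux_S_zero {m : ℕ} (A : Fin (2*m+2) → Module.End ℝ V) :
    ∑ τ : Perm (Fin (2*m+2)), ((Perm.sign τ : ℤ) : ℝ) *
      LinearMap.trace ℝ V (List.ofFn fun i => A (τ i)).prod = 0 := by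
  set S := ∑ τ : Perm (Fin (2*m+2)), ((Perm.sign τ : ℤ) : ℝ) *
      LinearMap.trace ℝ V (List.ofFn fun i => A (τ i)).prod with hS
  have h : S = -S := by
    conv_lhs => rw [hS, ← Equiv.sum_comp (Equiv.mulRight (finRotate (2*m+2)))]
    rw [hS, ← Finset.sum_neg_distrib]
    refine Finset.sum_congr rfl fun τ _ => ?_
    have h1 : ((Perm.sign (τ * finRotate (2*m+2)) : ℤ) : ℝ) = - ((Perm.sign τ : ℤ) : ℝ) := by
      rw [Perm.sign_mul, sign_finRotate, show 2*m+2-1 = 2*m+1 from rfl, Odd.neg_one_pow ⟨m, rfl⟩]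
      simp
    have h2 : LinearMap.trace ℝ V (List.ofFn fun i => A ((τ * finRotate (2*m+2)) i)).prod
        = LinearMap.trace ℝ V (List.ofFn fun i => A (τ i)).prod := by
      rw [List.ofFn_succ', List.ofFn_succ (f := fun i => A (τ i))]
      simp only [List.concat_eq_append, List.prod_append, List.prod_cons, List.prod_nil, mul_one,
        Perm.mul_apply]
      rw [LinearMap.trace_mul_comm]
      simp
    simp only [Equiv.coe_mulRight, h1, h2, neg_mul]
  linarith

lemma aux_S_zero' {m : ℕ} (A : Fin (2*m+2) → Module.End ℝ V) (ρ : Perm (Fin (2*m+2))) :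
    ∑ τ : Perm (Fin (2*m+2)), ((Perm.sign τ : ℤ) : ℝ) *
      LinearMap.trace ℝ V (List.ofFn fun i => A (τ (ρ i))).prod = 0 := by
  have h := aux_S_zero A
  rw [← Equiv.sum_comp (Equiv.mulRight ρ)] at h
  have h' := congrArg (fun t => ((Perm.sign ρ : ℤ) : ℝ) * t) h
  simp only [Finset.mul_sum, mul_zero] at h'
  rw [← h']
  refine Finset.sum_congr rfl fun τ _ => ?_
  have : ((Perm.sign ρ : ℤ) : ℝ) * ((Perm.sign ρ : ℤ) : ℝ) = 1 := by
    norm_cast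
    simp
  simp only [Equiv.coe_mulRight, Perm.sign_mul, Perm.mul_apply]
  push_cast
  linear_combination (-((Perm.sign τ : ℤ) : ℝ) *
    LinearMap.trace ℝ V (List.ofFn fun i => A (τ (ρ i))).prod) * this

lemma aux_prod_sub {n : ℕ} (σ : Perm (Fin (n+1))) (a b : Module.End ℝ V)
    (r : Fin n → Module.End ℝ V) :
    (List.ofFn fun i => (Fin.cons (a - b) r : Fin (n+1) → Module.End ℝ V) (σ i)).prod =
    (List.ofFn fun i => (Fin.cons a r : Fin (n+1) → Module.End ℝ V) (σ i)).prod -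
    (List.ofFn fun i => (Fin.cons b r : Fin (n+1) → Module.End ℝ V) (σ i)).prod := by
  let f := ((MultilinearMap.mkPiAlgebraFin ℝ (n+1) (Module.End ℝ V)).domDomCongr σ).curryLeft
  have h : f (a - b) r = f a r - f b r := by simp only [map_sub, sub_apply]
  exact h
end

section
variable (L : Type*) [LieRing L] [LieAlgebra ℝ L]
open Equiv

lemma aux_total {m : ℕ} (x : Fin (2*m+2) → L) :
    ∑ τ : Perm (Fin (2*m+2)), ((Perm.sign τ : ℤ) : ℝ) *
      altAdTraceForm L (Fin.cons ⁅x (τ 0), x (τ 1)⁆ (fun i : Fin (2*m) => x (τ i.succ.succ)))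
      = 0 := by
  unfold altAdTraceForm
  simp_rw [Finset.mul_sum]
  rw [Finset.sum_comm]
  refine Finset.sum_eq_zero fun σ _ => ?_
  obtain ⟨ρ, hρ⟩ := aux_merge σ
  let A : Fin (2*m+2) → Module.End ℝ L := fun i => LieAlgebra.ad ℝ L (x i)
  have key : ∀ τ : Perm (Fin (2*m+2)),
      (List.ofFn fun i => LieAlgebra.ad ℝ L ((Fin.cons ⁅x (τ 0), x (τ 1)⁆
        (fun i : Fin (2*m) => x (τ i.succ.succ)) : Fin (2*m+1) → L) (σ i))).prod =
      (List.ofFn fun i => A (τ (ρ i))).prod -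
      (List.ofFn fun i => A (τ ((swap 0 1 * ρ : Perm (Fin (2*m+2))) i))).prod := by
    intro τ
    have e1 : ∀ k, LieAlgebra.ad ℝ L ((Fin.cons ⁅x (τ 0), x (τ 1)⁆
        (fun i : Fin (2*m) => x (τ i.succ.succ)) : Fin (2*m+1) → L) k) =
        (Fin.cons (A (τ 0) * A (τ 1) - A (τ 1) * A (τ 0))
          (fun i : Fin (2*m) => A (τ i.succ.succ)) : Fin (2*m+1) → Module.End ℝ L) k := by
      intro k
      refine Fin.cases ?_ (fun k => ?_) k
      · simp [A, LieHom.map_lie, Ring.lie_def]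
      · simp [A]
    simp_rw [e1]
    rw [aux_prod_sub]
    congr 1
    · exact hρ _ (fun i => A (τ i))
    · have := hρ _ (fun i => A (τ (swap 0 1 i)))
      simp only [swap_apply_left, swap_apply_right] at this
      simp only [Perm.mul_apply]
      rw [← this]
      congr
  simp_rw [key, map_sub, mul_sub]
  rw [Finset.sum_sub_distrib]
  have hh : ∀ ρ : Perm (Fin (2*m+2)), ∑ τ : Perm (Fin (2*m+2)), ((Perm.sign τ : ℤ) : ℝ) *
      (((Perm.sign σ : ℤ) : ℝ) *
      LinearMap.trace ℝ L (List.ofFn fun i => A (τ (ρ i))).prod) = 0 := by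
    intro ρ
    have := aux_S_zero' A ρ
    simp_rw [mul_left_comm]
    rw [← Finset.mul_sum, this, mul_zero]
  rw [hh, hh, sub_zero]

lemma aux_alt {k : ℕ} (y : Fin k → L) (e : Perm (Fin k)) :
    altAdTraceForm L (fun i => y (e i)) = ((Perm.sign e : ℤ) : ℝ) * altAdTraceForm L y := by
  unfold altAdTraceForm
  conv_rhs => rw [← Equiv.sum_comp (Equiv.mulLeft e), Finset.mul_sum]
  refine Finset.sum_congr rfl fun τ _ => ?_
  have : ((Perm.sign e : ℤ) : ℝ) * ((Perm.sign e : ℤ) : ℝ) = 1 := by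
    norm_cast
    simp
  simp only [Equiv.coe_mulLeft, Perm.sign_mul, Perm.mul_apply]
  push_cast
  linear_combination (-((Perm.sign τ : ℤ) : ℝ) *
    LinearMap.trace ℝ L (List.ofFn fun i => LieAlgebra.ad ℝ L (y (e (τ i)))).prod) * this

lemma aux_alt_cons {k : ℕ} (a : L) (y : Fin k → L) (e : Perm (Fin k)) :
    altAdTraceForm L (Fin.cons a (fun i => y (e i))) =
      ((Perm.sign e : ℤ) : ℝ) * altAdTraceForm L (Fin.cons a y) := by
  have := aux_alt L (Fin.cons a y : Fin (k+1) → L) (Perm.decomposeFin.symm (0, e))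
  rw [Perm.decomposeFin.symm_sign] at this
  simp only [if_true, one_mul] at this
  rw [← this]
  congr 1
  funext i
  refine Fin.cases ?_ (fun i => ?_) i <;> simp

lemma aux_neg {k : ℕ} (a : L) (y : Fin k → L) :
    altAdTraceForm L (Fin.cons (-a) y) = - altAdTraceForm L (Fin.cons a y) := by
  unfold altAdTraceForm
  rw [← Finset.sum_neg_distrib]
  refine Finset.sum_congr rfl fun σ _ => ?_
  let f := ((MultilinearMap.mkPiAlgebraFin ℝ (k+1) (Module.End ℝ L)).domDomCongr σ).curryLeft
  have h : f (LieAlgebra.ad ℝ L (-a)) (fun i => LieAlgebra.ad ℝ L (y i)) =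
    - f (LieAlgebra.ad ℝ L a) (fun i => LieAlgebra.ad ℝ L (y i)) := by
    simp only [map_neg]
    rfl
  have h' : ∀ b, (List.ofFn fun i => LieAlgebra.ad ℝ L ((Fin.cons b y : Fin (k+1) → L) (σ i))).prod
      = f (LieAlgebra.ad ℝ L b) (fun i => LieAlgebra.ad ℝ L (y i)) := by
    intro b
    change _ = (List.ofFn fun i => (Fin.cons (LieAlgebra.ad ℝ L b)
      (fun i => LieAlgebra.ad ℝ L (y i)) : Fin (k+1) → Module.End ℝ L) (σ i)).prod
    congr 2
    funext i
    refine Fin.cases ?_ (fun i => ?_) (σ i) <;> simp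
  rw [h', h', h, map_neg, mul_neg]

lemma aux_double {m : ℕ} (x : Fin (2*m+2) → L) :
    ∑ p : Fin (2*m+2), ∑ q : Fin (2*m+1), (-1 : ℝ) ^ ((p : ℕ) + (q : ℕ)) *
      altAdTraceForm L (Fin.cons ⁅x p, x (p.succAbove q)⁆
        (fun i : Fin (2*m) => x (p.succAbove (q.succAbove i)))) = 0 := by
  have h := aux_total L x
  have h1 := aux_perm_decomp x (fun z => altAdTraceForm L
    (Fin.cons ⁅z 0, z 1⁆ (fun i : Fin (2*m) => z i.succ.succ)))
  simp only [Function.comp] at h1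
  rw [h] at h1
  have h2 : ∀ p : Fin (2*m+2), ∑ e : Perm (Fin (2*m+1)), ((Perm.sign e : ℤ) : ℝ) *
      altAdTraceForm L (Fin.cons ⁅x p, x (p.succAbove (e 0))⁆
        (fun i : Fin (2*m) => x (p.succAbove (e i.succ)))) =
      (Nat.factorial (2*m) : ℝ) * ∑ q : Fin (2*m+1), (-1 : ℝ) ^ (q : ℕ) *
      altAdTraceForm L (Fin.cons ⁅x p, x (p.succAbove q)⁆
        (fun i : Fin (2*m) => x (p.succAbove (q.succAbove i)))) := by
    intro p
    have h3 := aux_perm_decomp (fun i => x (p.succAbove i)) (fun z => altAdTraceForm L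
      (Fin.cons ⁅x p, z 0⁆ (fun i : Fin (2*m) => z i.succ)))
    simp only [Function.comp] at h3
    rw [h3, Finset.mul_sum]
    refine Finset.sum_congr rfl fun q _ => ?_
    simp only [Fin.cons_zero, Fin.cons_succ]
    have h4 : ∀ e : Perm (Fin (2*m)), ((Perm.sign e : ℤ) : ℝ) *
        altAdTraceForm L (Fin.cons ⁅x p, x (p.succAbove q)⁆
        (fun i : Fin (2*m) => x (p.succAbove (q.succAbove (e i))))) =
        altAdTraceForm L (Fin.cons ⁅x p, x (p.succAbove q)⁆
        (fun i : Fin (2*m) => x (p.succAbove (q.succAbove i)))) := by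
      intro e
      rw [aux_alt_cons L _ (fun i : Fin (2*m) => x (p.succAbove (q.succAbove i))) e, ← mul_assoc]
      have : ((Perm.sign e : ℤ) : ℝ) * ((Perm.sign e : ℤ) : ℝ) = 1 := by
        norm_cast
        simp
      rw [this, one_mul]
    simp_rw [h4]
    simp [Fintype.card_perm]
    ring
  have h5 : (0 : ℝ) = (Nat.factorial (2*m) : ℝ) * ∑ p : Fin (2*m+2), ∑ q : Fin (2*m+1),
      (-1 : ℝ) ^ ((p : ℕ) + (q : ℕ)) *
      altAdTraceForm L (Fin.cons ⁅x p, x (p.succAbove q)⁆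
        (fun i : Fin (2*m) => x (p.succAbove (q.succAbove i)))) := by
    rw [h1, Finset.mul_sum]
    refine Finset.sum_congr rfl fun p _ => ?_
    have := h2 p
    simp only [Fin.cons_zero, Fin.cons_succ, ← Fin.succ_zero_eq_one]
    rw [this, mul_left_comm, Finset.mul_sum]
    simp_rw [pow_add, mul_assoc]
  exact (mul_eq_zero.1 h5.symm).resolve_left (by positivity)
end

/-- For a finite-dimensional real Lie algebra `L` and odd `k = 2m+1 ≥ 1`, the form `w_k` is a
Chevalley–Eilenberg cocycle: for all `x_1, …, x_{k+1}`,
`∑_{i<j} (−1)^{i+j} w_k([x_i,x_j], x_1, …, x̂_i, …, x̂_j, …, x_{k+1}) = 0`.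
Here `Fin.cons` inserts the bracket as first argument and the double `succAbove`
enumerates the remaining arguments, omitting positions `i < j`. -/
theorem stmt_2 (L : Type*) [LieRing L] [LieAlgebra ℝ L] [FiniteDimensional ℝ L]
    (m : ℕ) (x : Fin (2 * m + 2) → L) :
    ∑ i : Fin (2 * m + 2), ∑ j : Fin (2 * m + 2),
      (if h : i < j then
        (-1 : ℝ) ^ ((i : ℕ) + (j : ℕ)) *
          altAdTraceForm L (Fin.cons ⁅x i, x j⁆
            (fun p : Fin (2 * m) =>
              x (j.succAbove ((Fin.castLT i
                (Nat.lt_of_lt_of_le h (Nat.lt_succ_iff.mp j.isLt))).succAbove p))))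
      else 0) = 0 := by
  set E : Fin (2*m+2) → Fin (2*m+2) → ℝ := fun i j => (if h : i < j then
        (-1 : ℝ) ^ ((i : ℕ) + (j : ℕ)) *
          altAdTraceForm L (Fin.cons ⁅x i, x j⁆
            (fun p : Fin (2 * m) =>
              x (j.succAbove ((Fin.castLT i
                (Nat.lt_of_lt_of_le h (Nat.lt_succ_iff.mp j.isLt))).succAbove p))))
      else 0) with hE
  change ∑ i, ∑ j, E i j = 0
  have hd := aux_double L x
  have hEE : ∀ p, E p p = 0 := fun p => by simp [hE]
  have key : ∀ p : Fin (2*m+2), ∀ q : Fin (2*m+1), (-1 : ℝ) ^ ((p : ℕ) + (q : ℕ)) *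
      altAdTraceForm L (Fin.cons ⁅x p, x (p.succAbove q)⁆
        (fun i : Fin (2*m) => x (p.succAbove (q.succAbove i)))) =
      -(E p (p.succAbove q) + E (p.succAbove q) p) := by
    intro p q
    rcases lt_or_ge q.castSucc p with hq | hq
    · have hs : p.succAbove q = q.castSucc := Fin.succAbove_of_castSucc_lt _ _ hq
      rw [hs]
      simp only [hE, dif_pos hq, dif_neg (not_lt.2 hq.le), zero_add]
      rw [← lie_skew, aux_neg, mul_neg, add_comm (p : ℕ)]
      rfl
    · have hs : p.succAbove q = q.succ := Fin.succAbove_of_le_castSucc _ _ hq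
      have hlt : p < q.succ := Fin.le_castSucc_iff.1 hq
      rw [hs]
      simp only [hE, dif_pos hlt, dif_neg (not_lt.2 hlt.le), add_zero]
      have hpow : (-1 : ℝ) ^ ((p : ℕ) + (q.succ : ℕ)) = (-1) ^ ((p : ℕ) + (q : ℕ)) * (-1) := by
        rw [Fin.val_succ, ← add_assoc, pow_succ]
      rw [hpow]
      have : ∀ i : Fin (2*m), p.succAbove (q.succAbove i) = q.succ.succAbove ((Fin.castLT p
                (Nat.lt_of_lt_of_le hlt (Nat.lt_succ_iff.mp q.succ.isLt))).succAbove i) := by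
        intro i
        rw [Fin.le_def] at hq
        simp only [Fin.val_castSucc] at hq
        ext
        simp only [Fin.succAbove, Fin.lt_def, apply_ite Fin.val, Fin.val_castSucc, Fin.val_succ,
          Fin.val_castLT]
        split_ifs <;> omega
      simp_rw [this]
      ring
  simp_rw [key] at hd
  have h6 : ∀ p : Fin (2*m+2), ∑ q : Fin (2*m+1), -(E p (p.succAbove q) + E (p.succAbove q) p) =
      ∑ j, -(E p j + E j p) := by
    intro p
    rw [Fin.sum_univ_succAbove (fun j => -(E p j + E j p)) p]
    simp [hEE]
  simp_rw [h6, Finset.sum_neg_distrib, Finset.sum_add_distrib] at hd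
  rw [Finset.sum_comm (f := fun p j => E j p)] at hd
  linarith
end

section
/- Let U ⊆ ℝⁿ be open and connected, and let ε : U × U → GL(n,ℝ) be a smooth map satisfying ε(x,x) = I and ε(y,z) · ε(x,y) = ε(x,z) for all x, y, z ∈ U, with Christoffel symbols Γ^i_{jk}(x) := [∂ε^i_k(x,y)/∂y^j]_{y=x}. For p ∈ U and v ∈ ℝⁿ let V_{p,v} : U → ℝⁿ denote the ε-invariant vector field V_{p,v}(x) := ε(p,x) · v. Then the following are equivalent: (i) the curvature R₂ vanishes on U, i.e. ∂Γ^i_{kj}/∂x^r + ∑_a Γ^a_{kr}Γ^i_{aj} − ∂Γ^i_{kr}/∂x^j − ∑_a Γ^a_{kj}Γ^i_{ar} = 0 for all indices and all x ∈ U; (ii) the ε-invariant vector fields are closed under the Lie bracket: for every p ∈ U and v, w ∈ ℝⁿ there exists u ∈ ℝⁿ such that the Lie bracket [V_{p,v}, V_{p,w}], with components ∑_a (V_{p,v}^a · ∂V_{p,w}^i/∂x^a − V_{p,w}^a · ∂V_{p,v}^i/∂x^a), equals V_{p,u} on U. -/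
/-- The Christoffel symbols `Γ^i_{jk}(x) = [∂ε^i_k(x,y)/∂y^j]_{y=x}` of a splitting `ε`. -/
noncomputable def Gamma {n : ℕ}
    (ε : (Fin n → ℝ) → (Fin n → ℝ) → Matrix (Fin n) (Fin n) ℝ)
    (x : Fin n → ℝ) (i j k : Fin n) : ℝ :=
  fderiv ℝ (fun y => ε x y i k) x (Pi.single j 1)

section Helpers

open Matrix

variable {n : ℕ}

/-- Partial derivative of a scalar function. -/
noncomputable def pD (k : Fin n) (f : (Fin n → ℝ) → ℝ) (x : Fin n → ℝ) : ℝ :=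
  fderiv ℝ f x (Pi.single k 1)

/-- Entrywise partial derivative of a matrix function. -/
noncomputable def pM (k : Fin n) (M : (Fin n → ℝ) → Matrix (Fin n) (Fin n) ℝ)
    (x : Fin n → ℝ) : Matrix (Fin n) (Fin n) ℝ :=
  Matrix.of fun i j => pD k (fun y => M y i j) x

/-- Entrywise partial derivative of a vector function. -/
noncomputable def pV (k : Fin n) (V : (Fin n → ℝ) → (Fin n → ℝ))
    (x : Fin n → ℝ) : Fin n → ℝ :=
  fun i => pD k (fun y => V y i) x

/-- Entrywise differentiability of a matrix function. -/
def dM (M : (Fin n → ℝ) → Matrix (Fin n) (Fin n) ℝ) (x : Fin n → ℝ) : Prop :=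
  ∀ i j, DifferentiableAt ℝ (fun y => M y i j) x

/-- Entrywise differentiability of a vector function. -/
def dV (V : (Fin n → ℝ) → (Fin n → ℝ)) (x : Fin n → ℝ) : Prop :=
  ∀ i, DifferentiableAt ℝ (fun y => V y i) x

theorem pD_congr (k : Fin n) {f g : (Fin n → ℝ) → ℝ} {U : Set (Fin n → ℝ)} (hU : IsOpen U)
    {x : Fin n → ℝ} (hx : x ∈ U) (h : ∀ y ∈ U, f y = g y) : pD k f x = pD k g x := by
  unfold pD
  rw [Filter.EventuallyEq.fderiv_eq]
  filter_upwards [hU.mem_nhds hx] with y hy using h y hy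

theorem pM_congr (k : Fin n) {f g : (Fin n → ℝ) → Matrix (Fin n) (Fin n) ℝ}
    {U : Set (Fin n → ℝ)} (hU : IsOpen U)
    {x : Fin n → ℝ} (hx : x ∈ U) (h : ∀ y ∈ U, f y = g y) : pM k f x = pM k g x := by
  ext i j
  exact pD_congr k hU hx fun y hy => by rw [h y hy]

theorem pV_congr (k : Fin n) {f g : (Fin n → ℝ) → (Fin n → ℝ)}
    {U : Set (Fin n → ℝ)} (hU : IsOpen U)
    {x : Fin n → ℝ} (hx : x ∈ U) (h : ∀ y ∈ U, f y = g y) : pV k f x = pV k g x := by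
  ext i
  exact pD_congr k hU hx fun y hy => by rw [h y hy]

theorem pD_mul (k : Fin n) {f g : (Fin n → ℝ) → ℝ} {x : Fin n → ℝ}
    (hf : DifferentiableAt ℝ f x) (hg : DifferentiableAt ℝ g x) :
    pD k (fun y => f y * g y) x = pD k f x * g x + f x * pD k g x := by
  unfold pD
  rw [fderiv_fun_mul hf hg]
  simp
  ring

theorem pD_sub (k : Fin n) {f g : (Fin n → ℝ) → ℝ} {x : Fin n → ℝ}
    (hf : DifferentiableAt ℝ f x) (hg : DifferentiableAt ℝ g x) :
    pD k (fun y => f y - g y) x = pD k f x - pD k g x := by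
  unfold pD
  rw [fderiv_fun_sub hf hg]
  simp

theorem pD_sum (k : Fin n) {f : Fin n → (Fin n → ℝ) → ℝ} {x : Fin n → ℝ}
    (hf : ∀ a, DifferentiableAt ℝ (f a) x) :
    pD k (fun y => ∑ a, f a y) x = ∑ a, pD k (f a) x := by
  unfold pD
  rw [fderiv_fun_sum (fun a _ => hf a)]
  simp

theorem dM.mulVec {M : (Fin n → ℝ) → Matrix (Fin n) (Fin n) ℝ} {V : (Fin n → ℝ) → (Fin n → ℝ)}
    {x : Fin n → ℝ} (hM : dM M x) (hV : dV V x) : dV (fun y => M y *ᵥ V y) x := by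
  intro i
  simp only [Matrix.mulVec, dotProduct]
  exact DifferentiableAt.fun_sum fun a _ => (hM i a).fun_mul (hV a)

theorem dM.mul {M N : (Fin n → ℝ) → Matrix (Fin n) (Fin n) ℝ}
    {x : Fin n → ℝ} (hM : dM M x) (hN : dM N x) : dM (fun y => M y * N y) x := by
  intro i j
  simp only [Matrix.mul_apply]
  exact DifferentiableAt.fun_sum fun a _ => (hM i a).fun_mul (hN a j)

theorem pM_mul (k : Fin n) {M N : (Fin n → ℝ) → Matrix (Fin n) (Fin n) ℝ}
    {x : Fin n → ℝ} (hM : dM M x) (hN : dM N x) :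
    pM k (fun y => M y * N y) x = pM k M x * N x + M x * pM k N x := by
  ext i j
  simp only [pM, Matrix.mul_apply, Matrix.of_apply, Matrix.add_apply]
  rw [pD_sum k fun a => (hM i a).fun_mul (hN a j), ← Finset.sum_add_distrib]
  exact Finset.sum_congr rfl fun a _ => pD_mul k (hM i a) (hN a j)

theorem pV_mulVec (k : Fin n) {M : (Fin n → ℝ) → Matrix (Fin n) (Fin n) ℝ}
    {V : (Fin n → ℝ) → (Fin n → ℝ)}
    {x : Fin n → ℝ} (hM : dM M x) (hV : dV V x) :
    pV k (fun y => M y *ᵥ V y) x = pM k M x *ᵥ V x + M x *ᵥ pV k V x := by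
  ext i
  simp only [pM, pV, Matrix.mulVec, dotProduct, Matrix.of_apply, Pi.add_apply]
  rw [pD_sum k fun a => (hM i a).fun_mul (hV a), ← Finset.sum_add_distrib]
  exact Finset.sum_congr rfl fun a _ => pD_mul k (hM i a) (hV a)

theorem dV_const (v : Fin n → ℝ) (x : Fin n → ℝ) : dV (fun _ => v) x :=
  fun i => differentiableAt_const (v i)

theorem pV_const (k : Fin n) (v : Fin n → ℝ) (x : Fin n → ℝ) : pV k (fun _ => v) x = 0 := by
  ext i
  simp [pV, pD]

theorem dM_const (v : Matrix (Fin n) (Fin n) ℝ) (x : Fin n → ℝ) : dM (fun _ => v) x :=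
  fun i j => differentiableAt_const (v i j)

theorem pM_const (k : Fin n) (v : Matrix (Fin n) (Fin n) ℝ) (x : Fin n → ℝ) :
    pM k (fun _ => v) x = 0 := by
  ext i
  simp [pM, pD]

/-- The bracket of two fields, expressed through the connection matrices. -/
noncomputable def brG (G : Fin n → (Fin n → ℝ) → Matrix (Fin n) (Fin n) ℝ)
    (V W : (Fin n → ℝ) → (Fin n → ℝ)) (y : Fin n → ℝ) : Fin n → ℝ :=
  fun i => ∑ a, (V y a * (G a y *ᵥ W y) i - W y a * (G a y *ᵥ V y) i)

theorem dV_brG {G : Fin n → (Fin n → ℝ) → Matrix (Fin n) (Fin n) ℝ}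
    {V W : (Fin n → ℝ) → (Fin n → ℝ)} {x : Fin n → ℝ}
    (hG : ∀ a, dM (G a) x) (hV : dV V x) (hW : dV W x) : dV (brG G V W) x := by
  intro i
  exact DifferentiableAt.fun_sum fun a _ =>
    ((hV a).fun_mul ((hG a).mulVec hW i)).fun_sub ((hW a).fun_mul ((hG a).mulVec hV i))

theorem core {G : Fin n → (Fin n → ℝ) → Matrix (Fin n) (Fin n) ℝ}
    {V W : (Fin n → ℝ) → (Fin n → ℝ)} {x : Fin n → ℝ}
    (hG : ∀ a, dM (G a) x) (hV : dV V x) (hW : dV W x)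
    (hVG : ∀ k, pV k V x = G k x *ᵥ V x) (hWG : ∀ k, pV k W x = G k x *ᵥ W x)
    (flat : ∀ r j, pM r (G j) x + G j x * G r x = pM j (G r) x + G r x * G j x)
    (k i : Fin n) :
    pV k (brG G V W) x i - (G k x *ᵥ brG G V W x) i =
      ∑ r, ∑ j, (pM r (G k) x i j + (∑ a, G k x a r * G a x i j)
        - pM j (G k) x i r - ∑ a, G k x a j * G a x i r) * (V x r * W x j) := by
  have h1 : pV k (brG G V W) x i = ∑ a,
      ((G k x *ᵥ V x) a * (G a x *ᵥ W x) i
        + V x a * ((pM a (G k) x *ᵥ W x) i + (G k x *ᵥ (G a x *ᵥ W x)) i)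
        - ((G k x *ᵥ W x) a * (G a x *ᵥ V x) i
        + W x a * ((pM a (G k) x *ᵥ V x) i + (G k x *ᵥ (G a x *ᵥ V x)) i))) := by
    have h0 := pD_sum k (f := fun a y => V y a * (G a y *ᵥ W y) i - W y a * (G a y *ᵥ V y) i)
      (x := x) (fun a =>
      ((hV a).fun_mul ((hG a).mulVec hW i)).fun_sub ((hW a).fun_mul ((hG a).mulVec hV i)))
    refine h0.trans (Finset.sum_congr rfl fun a _ => ?_)
    rw [pD_sub k ((hV a).fun_mul ((hG a).mulVec hW i)) ((hW a).fun_mul ((hG a).mulVec hV i)),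
      pD_mul k (hV a) ((hG a).mulVec hW i), pD_mul k (hW a) ((hG a).mulVec hV i)]
    have e1 : ∀ {Z : (Fin n → ℝ) → (Fin n → ℝ)}, dV Z x → (pV k Z x = G k x *ᵥ Z x) →
        pD k (fun y => (G a y *ᵥ Z y) i) x =
        (pM a (G k) x *ᵥ Z x) i + (G k x *ᵥ (G a x *ᵥ Z x)) i := by
      intro Z hZ hZG
      have := congrFun (pV_mulVec k (hG a) hZ) i
      rw [hZG, Matrix.mulVec_mulVec, ← Matrix.add_mulVec, flat, Matrix.add_mulVec,
        ← Matrix.mulVec_mulVec] at this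
      exact this
    rw [e1 hV (hVG k), e1 hW (hWG k)]
    have e2 : pD k (fun y => V y a) x = (G k x *ᵥ V x) a := congrFun (hVG k) a
    have e3 : pD k (fun y => W y a) x = (G k x *ᵥ W x) a := congrFun (hWG k) a
    rw [e2, e3]
  have h2 : (G k x *ᵥ brG G V W x) i = ∑ a,
      (V x a * (G k x *ᵥ (G a x *ᵥ W x)) i - W x a * (G k x *ᵥ (G a x *ᵥ V x)) i) := by
    have : brG G V W x = ∑ a, (V x a • (G a x *ᵥ W x) - W x a • (G a x *ᵥ V x)) := by
      ext j
      simp [brG]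
    rw [this, Matrix.mulVec_sum]
    simp [Matrix.mulVec_sub, Matrix.mulVec_smul]
  rw [h1, h2, ← Finset.sum_sub_distrib]
  have h3 : ∀ (V W : Fin n → ℝ),
      ∑ a, (G k x *ᵥ V) a * (G a x *ᵥ W) i =
      ∑ r, ∑ j, (∑ a, G k x a r * G a x i j) * (V r * W j) := by
    intro V W
    simp only [Matrix.mulVec, dotProduct, Finset.sum_mul_sum]
    simp only [Finset.sum_mul]
    rw [Finset.sum_comm]
    refine Finset.sum_congr rfl fun r _ => ?_
    rw [Finset.sum_comm]
    refine Finset.sum_congr rfl fun j _ => Finset.sum_congr rfl fun a _ => by ring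
  have h4 : ∀ (V W : Fin n → ℝ), ∑ a, V a * (pM a (G k) x *ᵥ W) i =
      ∑ r, ∑ j, pM r (G k) x i j * (V r * W j) := by
    intro V W
    simp only [Matrix.mulVec, dotProduct, Finset.mul_sum]
    refine Finset.sum_congr rfl fun j _ => Finset.sum_congr rfl fun a _ => by ring
  have h5 := h3 (V x) (W x)
  have h6 := h3 (W x) (V x)
  have h7 := h4 (V x) (W x)
  have h8 := h4 (W x) (V x)
  rw [Finset.sum_comm] at h6 h8
  simp only [sub_mul, add_mul, Finset.sum_sub_distrib, Finset.sum_add_distrib]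
  simp only [mul_comm (V x _) (W x _)] at h5 h7 ⊢
  rw [← h5, ← h6, ← h7, ← h8]
  simp only [mul_add, Finset.sum_add_distrib]
  ring

/-- The connection matrices. -/
noncomputable def GM (ε : (Fin n → ℝ) → (Fin n → ℝ) → Matrix (Fin n) (Fin n) ℝ)
    (k : Fin n) (x : Fin n → ℝ) : Matrix (Fin n) (Fin n) ℝ :=
  Matrix.of fun i j => Gamma ε x i k j

theorem smooth_right
    {U : Set (Fin n → ℝ)} (hU : IsOpen U)
    {ε : (Fin n → ℝ) → (Fin n → ℝ) → Matrix (Fin n) (Fin n) ℝ}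
    (hsmooth : ∀ i k, ContDiffOn ℝ (⊤ : ℕ∞)
      (fun q : (Fin n → ℝ) × (Fin n → ℝ) => ε q.1 q.2 i k) (U ×ˢ U))
    {p x : Fin n → ℝ} (hp : p ∈ U) (hx : x ∈ U) (i k : Fin n) :
    ContDiffAt ℝ (⊤ : ℕ∞) (fun y => ε p y i k) x := by
  have h := (hsmooth i k).contDiffAt (x := (p, x)) ((hU.prod hU).mem_nhds ⟨hp, hx⟩)
  exact h.comp x (f := fun y => (p, y)) (contDiffAt_const.prodMk contDiffAt_id)

theorem smooth_left
    {U : Set (Fin n → ℝ)} (hU : IsOpen U)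
    {ε : (Fin n → ℝ) → (Fin n → ℝ) → Matrix (Fin n) (Fin n) ℝ}
    (hsmooth : ∀ i k, ContDiffOn ℝ (⊤ : ℕ∞)
      (fun q : (Fin n → ℝ) × (Fin n → ℝ) => ε q.1 q.2 i k) (U ×ˢ U))
    {p x : Fin n → ℝ} (hp : p ∈ U) (hx : x ∈ U) (i k : Fin n) :
    ContDiffAt ℝ (⊤ : ℕ∞) (fun y => ε y p i k) x := by
  have h := (hsmooth i k).contDiffAt (x := (x, p)) ((hU.prod hU).mem_nhds ⟨hx, hp⟩)
  exact h.comp x (f := fun y => (y, p)) (contDiffAt_id.prodMk contDiffAt_const)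

theorem dM_right
    {U : Set (Fin n → ℝ)} (hU : IsOpen U)
    {ε : (Fin n → ℝ) → (Fin n → ℝ) → Matrix (Fin n) (Fin n) ℝ}
    (hsmooth : ∀ i k, ContDiffOn ℝ (⊤ : ℕ∞)
      (fun q : (Fin n → ℝ) × (Fin n → ℝ) => ε q.1 q.2 i k) (U ×ˢ U))
    {p x : Fin n → ℝ} (hp : p ∈ U) (hx : x ∈ U) : dM (fun y => ε p y) x :=
  fun i k => (smooth_right hU hsmooth hp hx i k).differentiableAt (by simp)

theorem dM_left
    {U : Set (Fin n → ℝ)} (hU : IsOpen U)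
    {ε : (Fin n → ℝ) → (Fin n → ℝ) → Matrix (Fin n) (Fin n) ℝ}
    (hsmooth : ∀ i k, ContDiffOn ℝ (⊤ : ℕ∞)
      (fun q : (Fin n → ℝ) × (Fin n → ℝ) => ε q.1 q.2 i k) (U ×ˢ U))
    {p x : Fin n → ℝ} (hp : p ∈ U) (hx : x ∈ U) : dM (fun y => ε y p) x :=
  fun i k => (smooth_left hU hsmooth hp hx i k).differentiableAt (by simp)

theorem dM_pM
    {U : Set (Fin n → ℝ)} (hU : IsOpen U)
    {ε : (Fin n → ℝ) → (Fin n → ℝ) → Matrix (Fin n) (Fin n) ℝ}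
    (hsmooth : ∀ i k, ContDiffOn ℝ (⊤ : ℕ∞)
      (fun q : (Fin n → ℝ) × (Fin n → ℝ) => ε q.1 q.2 i k) (U ×ˢ U))
    {p x : Fin n → ℝ} (hp : p ∈ U) (hx : x ∈ U) (k : Fin n) :
    dM (pM k (fun y => ε p y)) x := by
  intro i j
  have h := (smooth_right hU hsmooth hp hx i j).fderiv_right (m := 1) (by norm_cast)
  exact (h.differentiableAt (by simp)).clm_apply (differentiableAt_const _)

theorem pM_symm
    {U : Set (Fin n → ℝ)} (hU : IsOpen U)
    {ε : (Fin n → ℝ) → (Fin n → ℝ) → Matrix (Fin n) (Fin n) ℝ}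
    (hsmooth : ∀ i k, ContDiffOn ℝ (⊤ : ℕ∞)
      (fun q : (Fin n → ℝ) × (Fin n → ℝ) => ε q.1 q.2 i k) (U ×ˢ U))
    {p x : Fin n → ℝ} (hp : p ∈ U) (hx : x ∈ U) (r k : Fin n) :
    pM r (pM k (fun y => ε p y)) x = pM k (pM r (fun y => ε p y)) x := by
  ext i j
  have hs := smooth_right hU hsmooth hp hx i j
  have hd := (hs.fderiv_right (m := 1) (by norm_cast)).differentiableAt (by simp)
  have key : ∀ r k : Fin n, pM r (pM k (fun y => ε p y)) x i j =
      fderiv ℝ (fderiv ℝ (fun y => ε p y i j)) x (Pi.single r 1) (Pi.single k 1) := by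
    intro r k
    simp only [pM, pD, Matrix.of_apply]
    rw [fderiv_clm_apply hd (differentiableAt_const _)]
    simp
  rw [key, key]
  exact (hs.isSymmSndFDerivAt (by simp; norm_cast)) _ _

theorem pM_eps
    {U : Set (Fin n → ℝ)} (hU : IsOpen U)
    {ε : (Fin n → ℝ) → (Fin n → ℝ) → Matrix (Fin n) (Fin n) ℝ}
    (hsmooth : ∀ i k, ContDiffOn ℝ (⊤ : ℕ∞)
      (fun q : (Fin n → ℝ) × (Fin n → ℝ) => ε q.1 q.2 i k) (U ×ˢ U))
    (hCoc : ∀ x ∈ U, ∀ y ∈ U, ∀ z ∈ U, ε y z * ε x y = ε x z)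
    {p x : Fin n → ℝ} (hp : p ∈ U) (hx : x ∈ U) (k : Fin n) :
    pM k (fun y => ε p y) x = GM ε k x * ε p x := by
  rw [pM_congr k hU hx (g := fun y => ε x y * ε p x) fun y hy => (hCoc p hp x hx y hy).symm,
    pM_mul k (dM_right hU hsmooth hx hx) (dM_const _ _), pM_const, mul_zero, add_zero]
  rfl

theorem GM_eq
    {U : Set (Fin n → ℝ)} (hU : IsOpen U)
    {ε : (Fin n → ℝ) → (Fin n → ℝ) → Matrix (Fin n) (Fin n) ℝ}
    (hsmooth : ∀ i k, ContDiffOn ℝ (⊤ : ℕ∞)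
      (fun q : (Fin n → ℝ) × (Fin n → ℝ) => ε q.1 q.2 i k) (U ×ˢ U))
    (hId : ∀ x ∈ U, ε x x = 1)
    (hCoc : ∀ x ∈ U, ∀ y ∈ U, ∀ z ∈ U, ε y z * ε x y = ε x z)
    {p x : Fin n → ℝ} (hp : p ∈ U) (hx : x ∈ U) (k : Fin n) :
    GM ε k x = pM k (fun y => ε p y) x * ε x p := by
  rw [pM_eps hU hsmooth hCoc hp hx, mul_assoc, hCoc x hx p hp x hx, hId x hx, mul_one]

theorem dM_GM
    {U : Set (Fin n → ℝ)} (hU : IsOpen U)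
    {ε : (Fin n → ℝ) → (Fin n → ℝ) → Matrix (Fin n) (Fin n) ℝ}
    (hsmooth : ∀ i k, ContDiffOn ℝ (⊤ : ℕ∞)
      (fun q : (Fin n → ℝ) × (Fin n → ℝ) => ε q.1 q.2 i k) (U ×ˢ U))
    (hId : ∀ x ∈ U, ε x x = 1)
    (hCoc : ∀ x ∈ U, ∀ y ∈ U, ∀ z ∈ U, ε y z * ε x y = ε x z)
    {x : Fin n → ℝ} (hx : x ∈ U) (k : Fin n) : dM (GM ε k) x := by
  have h := (dM_pM hU hsmooth hx hx k).mul (dM_left hU hsmooth hx hx)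
  intro i j
  refine (h i j).congr_of_eventuallyEq ?_
  filter_upwards [hU.mem_nhds hx] with y hy
  rw [GM_eq hU hsmooth hId hCoc hx hy]

theorem flat_GM
    {U : Set (Fin n → ℝ)} (hU : IsOpen U)
    {ε : (Fin n → ℝ) → (Fin n → ℝ) → Matrix (Fin n) (Fin n) ℝ}
    (hsmooth : ∀ i k, ContDiffOn ℝ (⊤ : ℕ∞)
      (fun q : (Fin n → ℝ) × (Fin n → ℝ) => ε q.1 q.2 i k) (U ×ˢ U))
    (hId : ∀ x ∈ U, ε x x = 1)
    (hCoc : ∀ x ∈ U, ∀ y ∈ U, ∀ z ∈ U, ε y z * ε x y = ε x z)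
    {x : Fin n → ℝ} (hx : x ∈ U) (r j : Fin n) :
    pM r (GM ε j) x + GM ε j x * GM ε r x = pM j (GM ε r) x + GM ε r x * GM ε j x := by
  have key : ∀ r j : Fin n, pM r (pM j (fun y => ε x y)) x =
      pM r (GM ε j) x + GM ε j x * GM ε r x := by
    intro r j
    rw [pM_congr r hU hx (g := fun y => GM ε j y * ε x y)
      fun y hy => pM_eps hU hsmooth hCoc hx hy j,
      pM_mul r (dM_GM hU hsmooth hId hCoc hx j) (dM_right hU hsmooth hx hx),
      pM_eps hU hsmooth hCoc hx hx, hId x hx, mul_one, mul_one]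
  rw [← key, ← key, pM_symm hU hsmooth hx hx]

theorem pV_eps
    {U : Set (Fin n → ℝ)} (hU : IsOpen U)
    {ε : (Fin n → ℝ) → (Fin n → ℝ) → Matrix (Fin n) (Fin n) ℝ}
    (hsmooth : ∀ i k, ContDiffOn ℝ (⊤ : ℕ∞)
      (fun q : (Fin n → ℝ) × (Fin n → ℝ) => ε q.1 q.2 i k) (U ×ˢ U))
    (hCoc : ∀ x ∈ U, ∀ y ∈ U, ∀ z ∈ U, ε y z * ε x y = ε x z)
    {p x : Fin n → ℝ} (hp : p ∈ U) (hx : x ∈ U) (k : Fin n) (v : Fin n → ℝ) :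
    pV k (fun y => ε p y *ᵥ v) x = GM ε k x *ᵥ (ε p x *ᵥ v) := by
  rw [pV_mulVec k (dM_right hU hsmooth hp hx) (dV_const _ _), pV_const, Matrix.mulVec_zero,
    add_zero, pM_eps hU hsmooth hCoc hp hx, Matrix.mulVec_mulVec]

end Helpers

/-- For a smooth splitting `ε` on an open connected set `U`, the curvature `R₂(ε)`
vanishes on `U` if and only if the `ε`-invariant vector fields `V_{p,v}(x) = ε(p,x)·v`
are closed under the Lie bracket
`[V,W]^i = ∑_a (V^a ∂W^i/∂x^a − W^a ∂V^i/∂x^a)`. -/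
theorem stmt_17 {n : ℕ} (U : Set (Fin n → ℝ)) (hU : IsOpen U) (hconn : IsConnected U)
    (ε : (Fin n → ℝ) → (Fin n → ℝ) → Matrix (Fin n) (Fin n) ℝ)
    (hsmooth : ∀ i k, ContDiffOn ℝ (⊤ : ℕ∞)
      (fun q : (Fin n → ℝ) × (Fin n → ℝ) => ε q.1 q.2 i k) (U ×ˢ U))
    (hunit : ∀ x ∈ U, ∀ y ∈ U, IsUnit (ε x y))
    (hId : ∀ x ∈ U, ε x x = 1)
    (hCoc : ∀ x ∈ U, ∀ y ∈ U, ∀ z ∈ U, ε y z * ε x y = ε x z) :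
    (∀ x ∈ U, ∀ i j k r : Fin n,
      fderiv ℝ (fun z => Gamma ε z i k j) x (Pi.single r 1) +
          (∑ a, Gamma ε x a k r * Gamma ε x i a j) -
        fderiv ℝ (fun z => Gamma ε z i k r) x (Pi.single j 1) -
          (∑ a, Gamma ε x a k j * Gamma ε x i a r) = 0) ↔
    (∀ p ∈ U, ∀ v w : Fin n → ℝ, ∃ u : Fin n → ℝ, ∀ x ∈ U, ∀ i : Fin n,
      (∑ a, ((ε p x).mulVec v a *
            fderiv ℝ (fun y => (ε p y).mulVec w i) x (Pi.single a 1) -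
          (ε p x).mulVec w a *
            fderiv ℝ (fun y => (ε p y).mulVec v i) x (Pi.single a 1))) =
        (ε p x).mulVec u i) := by
  have hdVe : ∀ p ∈ U, ∀ x ∈ U, ∀ v, dV (fun y => (ε p y).mulVec v) x := fun p hp x hx v =>
    (dM_right hU hsmooth hp hx).mulVec (dV_const v x)
  have hbr : ∀ p ∈ U, ∀ v w, ∀ x ∈ U, ∀ i,
      (∑ a, ((ε p x).mulVec v a *
            fderiv ℝ (fun y => (ε p y).mulVec w i) x (Pi.single a 1) -
          (ε p x).mulVec w a *
            fderiv ℝ (fun y => (ε p y).mulVec v i) x (Pi.single a 1))) =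
      brG (GM ε) (fun y => (ε p y).mulVec v) (fun y => (ε p y).mulVec w) x i := by
    intro p hp v w x hx i
    refine Finset.sum_congr rfl fun a _ => ?_
    have e := fun v => congrFun (pV_eps hU hsmooth hCoc hp hx a v) i
    exact congrArg₂ _ (congrArg _ (e w)) (congrArg _ (e v))
  have hcore : ∀ p ∈ U, ∀ v w, ∀ x ∈ U, ∀ k i, _ := fun p hp v w x hx k i =>
    core (G := GM ε) (V := fun y => (ε p y).mulVec v) (W := fun y => (ε p y).mulVec w) (x := x)
      (fun a => dM_GM hU hsmooth hId hCoc hx a) (hdVe p hp x hx v) (hdVe p hp x hx w)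
      (fun k => pV_eps hU hsmooth hCoc hp hx k v) (fun k => pV_eps hU hsmooth hCoc hp hx k w)
      (flat_GM hU hsmooth hId hCoc hx) k i
  constructor
  · intro hR p hp v w
    set B := brG (GM ε) (fun y => (ε p y).mulVec v) (fun y => (ε p y).mulVec w) with hB
    have hdB : ∀ x ∈ U, dV B x := fun x hx =>
      dV_brG (fun a => dM_GM hU hsmooth hId hCoc hx a) (hdVe p hp x hx v) (hdVe p hp x hx w)
    have hpB : ∀ x ∈ U, ∀ k, pV k B x = (GM ε k x).mulVec (B x) := by
      intro x hx k
      ext i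
      rw [← sub_eq_zero, hB, hcore p hp v w x hx k i]
      refine Finset.sum_eq_zero fun r _ => Finset.sum_eq_zero fun j _ => ?_
      have := hR x hx i j k r
      refine mul_eq_zero_of_left ?_ _
      exact this
    let u : (Fin n → ℝ) → (Fin n → ℝ) := fun x => (ε x p).mulVec (B x)
    have hEu : ∀ x ∈ U, (ε p x).mulVec (u x) = B x := by
      intro x hx
      simp only [u]
      rw [Matrix.mulVec_mulVec, hCoc x hx p hp x hx, hId x hx, Matrix.one_mulVec]
    have hdu : ∀ x ∈ U, dV u x := fun x hx => (dM_left hU hsmooth hp hx).mulVec (hdB x hx)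
    have hpu : ∀ x ∈ U, ∀ k, pV k u x = 0 := by
      intro x hx k
      have h1 := pV_congr k hU hx hEu
      rw [pV_mulVec k (dM_right hU hsmooth hp hx) (hdu x hx), hpB x hx,
        pM_eps hU hsmooth hCoc hp hx, ← Matrix.mulVec_mulVec, hEu x hx] at h1
      have h2 := congrArg (ε x p).mulVec (left_eq_add.mp h1.symm)
      rwa [Matrix.mulVec_mulVec, hCoc p hp x hx p hp, hId p hp, Matrix.one_mulVec,
        Matrix.mulVec_zero] at h2
    refine ⟨u p, fun x hx i => ?_⟩
    rw [hbr p hp v w x hx i]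
    have hc : u x = u p := by
      ext i
      refine hU.is_const_of_fderiv_eq_zero (𝕜 := ℝ) (f := fun y => u y i) hconn.isPreconnected
        (fun y hy => (hdu y hy i).differentiableWithinAt) (fun y hy => ?_) hx hp
      apply ContinuousLinearMap.coe_injective
      refine LinearMap.pi_ext' fun k => LinearMap.ext_ring ?_
      simpa [pV, pD] using congrFun (hpu y hy k) i
    rw [← hc, hEu x hx]
  · intro h x hx i j k r
    obtain ⟨u, hu⟩ := h x hx (Pi.single r 1) (Pi.single j 1)
    have hB : ∀ y ∈ U, brG (GM ε) (fun y => (ε x y).mulVec (Pi.single r 1))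
        (fun y => (ε x y).mulVec (Pi.single j 1)) y = (ε x y).mulVec u := by
      intro y hy
      ext i
      rw [← hbr x hx _ _ y hy, hu y hy]
    have h1 := hcore x hx (Pi.single r 1) (Pi.single j 1) x hx k i
    rw [pV_congr k hU hx hB, pV_eps hU hsmooth hCoc hx hx, hB x hx, sub_self] at h1
    simp only [hId x hx, Matrix.one_mulVec] at h1
    rw [Finset.sum_eq_single r, Finset.sum_eq_single j] at h1
    · simp only [Pi.single_eq_same, mul_one] at h1
      exact h1.symm
    · intro b _ hb
      simp [hb]
    · simp
    · intro b _ hb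
      simp [hb]
    · simp
end
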